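/- arXiv:2205.11204 — 2 statements merged into one kernel-verified Lean document; each statement's English description precedes it below -/
import Mathlib

section
/- For every infinite set X ⊆ ℕ the series ∑_{n ∈ f⁻¹[X]} 1/n diverges, where f is the factorial-interval map. -/
/-- The factorial-interval map: `facMap n = k` for the unique `k ≥ 1` with
`k! < n ≤ (k+1)!`, and `facMap n = 0` for `n ≤ 1`. -/
def facMap (n : ℕ) : ℕ :=
  if n ≤ 1 then 0 else Nat.findGreatest (fun k => Nat.factorial k < n) n

theorem facMap_eq_of_mem_Ioc {k n : ℕ}
    (hn : n ∈ Finset.Ioc k.factorial (k + 1).factorial) : facMap n = k := by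
  obtain ⟨hlt, hle⟩ := Finset.mem_Ioc.1 hn
  have hpos := k.factorial_pos
  have hself := k.self_le_factorial
  rw [facMap, if_neg (by lia), Nat.findGreatest_eq_iff]
  refine ⟨by lia, fun _ => hlt, fun m hm _ => ?_⟩
  exact not_lt.2 (hle.trans (Nat.factorial_le hm))

theorem half_le_sum_Ioc_factorial {k : ℕ} (hk : 1 ≤ k) :
    (1 / 2 : ℝ) ≤ ∑ n ∈ Finset.Ioc k.factorial (k + 1).factorial, (1 : ℝ) / n := by
  have hpos : (0 : ℝ) < k.factorial := by exact_mod_cast k.factorial_pos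
  have hk' : (1 : ℝ) ≤ k := by exact_mod_cast hk
  have hterm : ∀ n ∈ Finset.Ioc k.factorial (k + 1).factorial,
      (1 : ℝ) / (k + 1).factorial ≤ 1 / n := by
    intro n hn
    obtain ⟨hlt, hle⟩ := Finset.mem_Ioc.1 hn
    have hn0 : (0 : ℝ) < n := by exact_mod_cast (Nat.zero_le _).trans_lt hlt
    exact one_div_le_one_div_of_le hn0 (by exact_mod_cast hle)
  refine le_trans ?_ (Finset.card_nsmul_le_sum _ _ _ hterm)
  rw [Nat.card_Ioc, nsmul_eq_mul, Nat.cast_sub (Nat.factorial_le k.le_succ),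
    Nat.factorial_succ, mul_one_div, Nat.cast_mul, Nat.cast_succ,
    div_le_div_iff₀ two_pos (by positivity)]
  nlinarith

theorem facMap_preimage_harmonic_diverges (X : Set ℕ) (hX : X.Infinite) :
    ¬ Summable (Set.indicator (facMap ⁻¹' X) (fun n : ℕ => (1 : ℝ) / n)) := by
  intro h
  obtain ⟨s, hs⟩ := summable_iff_vanishing_norm.1 h (1 / 2) (by norm_num)
  obtain ⟨k, hkX, hk⟩ := hX.exists_gt (s.sup id)
  have hdisj : Disjoint (Finset.Ioc k.factorial (k + 1).factorial) s := by
    refine Finset.disjoint_left.2 fun n hn hns => ?_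
    have hle : n ≤ s.sup id := Finset.le_sup (f := id) hns
    have hself := k.self_le_factorial
    have hlt := (Finset.mem_Ioc.1 hn).1
    lia
  have hlt := hs _ hdisj
  rw [Finset.sum_congr rfl fun n hn => Set.indicator_of_mem
    (show n ∈ facMap ⁻¹' X by rwa [Set.mem_preimage, facMap_eq_of_mem_Ioc hn]) _] at hlt
  exact absurd ((le_abs_self _).trans_lt hlt)
    (not_lt.2 (half_le_sum_Ioc_factorial (by lia)))
end

section
/- For every free ultrafilter u on ℕ there exists a free ultrafilter v on ℕ such that the image ultrafilter of v under f equals u (that is, {X ⊆ ℕ : f⁻¹[X] ∈ v} = u) and for every member A of v the series ∑_{n ∈ A} 1/n diverges. (In other words, the extension of f to βℕ maps F_Σ onto ℕ*.) -/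
/-- A free ultrafilter on `ℕ`: one containing no finite set. -/
def IsFreeUF (u : Ultrafilter ℕ) : Prop := ∀ A ∈ u, Set.Infinite A

/-- The real sequence `1 / n` restricted to `A`. -/
noncomputable def harmonicOn (A : Set ℕ) : ℕ → ℝ :=
  Set.indicator A (fun n : ℕ => (1 : ℝ) / n)

theorem harmonicOn_nonneg (A : Set ℕ) (n : ℕ) : 0 ≤ harmonicOn A n :=
  Set.indicator_nonneg (fun _ _ => by positivity) n

theorem summable_harmonicOn_mono {A B : Set ℕ} (hB : Summable (harmonicOn B)) (h : A ⊆ B) :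
    Summable (harmonicOn A) :=
  hB.of_nonneg_of_le (harmonicOn_nonneg A)
    (Set.indicator_le_indicator_of_subset h fun _ => by positivity)

theorem summable_harmonicOn_union {A B : Set ℕ} (hA : Summable (harmonicOn A))
    (hB : Summable (harmonicOn B)) : Summable (harmonicOn (A ∪ B)) := by
  refine (hA.add hB).of_nonneg_of_le (harmonicOn_nonneg _) fun n => ?_
  have h := congrFun (Set.indicator_union_add_inter (fun n : ℕ => (1 : ℝ) / n) A B) n
  have := harmonicOn_nonneg (A ∩ B) n
  simp only [harmonicOn, Pi.add_apply] at *
  linarith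

theorem Set.Finite.summable_harmonicOn {A : Set ℕ} (hA : A.Finite) : Summable (harmonicOn A) :=
  summable_of_hasFiniteSupport (hA.subset Set.support_indicator_subset)

/-- The filter of sets whose complement has a convergent sum of reciprocals. -/
def coSummableFilter : Filter ℕ :=
  Filter.comk (fun A => Summable (harmonicOn A)) Set.finite_empty.summable_harmonicOn
    (fun _ ht _ hs => summable_harmonicOn_mono ht hs)
    (fun _ hs _ ht => summable_harmonicOn_union hs ht)

theorem mem_coSummableFilter {A : Set ℕ} :
    A ∈ coSummableFilter ↔ Summable (harmonicOn Aᶜ) :=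
  Filter.mem_comk

theorem facMap_eq {k n : ℕ} (h₁ : k.factorial < n) (h₂ : n ≤ (k + 1).factorial) :
    facMap n = k := by
  have hpos := k.factorial_pos
  rw [facMap, if_neg (by omega), Nat.findGreatest_eq_iff]
  have := k.self_le_factorial
  refine ⟨by omega, fun _ => h₁, fun m hm _ => ?_⟩
  have := Nat.factorial_le (show k + 1 ≤ m by omega)
  omega

theorem half_le_sum_Ioc_two_mul {m : ℕ} (hm : 0 < m) :
    (1 / 2 : ℝ) ≤ ∑ n ∈ Finset.Ioc m (2 * m), (1 : ℝ) / n := by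
  have h : ∀ n ∈ Finset.Ioc m (2 * m), (1 : ℝ) / (2 * m) ≤ 1 / n := by
    intro n hn
    rw [Finset.mem_Ioc] at hn
    have h0 : (0 : ℝ) < n := by exact_mod_cast hm.trans hn.1
    exact one_div_le_one_div_of_le h0 (by exact_mod_cast hn.2)
  have h' := Finset.card_nsmul_le_sum _ _ _ h
  have hm' : (m : ℝ) ≠ 0 := by exact_mod_cast hm.ne'
  rw [Nat.card_Ioc, show 2 * m - m = m by omega, nsmul_eq_mul] at h'
  rwa [show (m : ℝ) * (1 / (2 * m)) = 1 / 2 by field_simp] at h'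

theorem not_summable_harmonicOn_preimage_facMap {X : Set ℕ} (hX : X.Infinite) :
    ¬ Summable (harmonicOn (facMap ⁻¹' X)) := by
  intro hs
  obtain ⟨s, hs⟩ := summable_iff_vanishing_norm.1 hs (1 / 2) (by norm_num)
  obtain ⟨k, hkX, hk⟩ := hX.exists_gt (s.sup id)
  have hle := k.self_le_factorial
  have hdisj : Disjoint (Finset.Ioc k.factorial (2 * k.factorial)) s := by
    refine Finset.disjoint_left.2 fun n hn hns => ?_
    have : n ≤ s.sup id := Finset.le_sup (f := id) hns
    rw [Finset.mem_Ioc] at hn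
    omega
  have hsum : ∑ n ∈ Finset.Ioc k.factorial (2 * k.factorial), harmonicOn (facMap ⁻¹' X) n =
      ∑ n ∈ Finset.Ioc k.factorial (2 * k.factorial), (1 : ℝ) / n := by
    refine Finset.sum_congr rfl fun n hn => Set.indicator_of_mem ?_ _
    rw [Finset.mem_Ioc] at hn
    have h₂ : n ≤ (k + 1).factorial := by
      rw [Nat.factorial_succ]
      exact hn.2.trans (Nat.mul_le_mul_right _ (by omega))
    rwa [Set.mem_preimage, facMap_eq hn.1 h₂]
  have hlt := (le_abs_self _).trans_lt (hs _ hdisj)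
  rw [hsum] at hlt
  exact absurd (half_le_sum_Ioc_two_mul k.factorial_pos) (not_le.2 hlt)

theorem comap_facMap_inf_coSummableFilter_neBot {u : Ultrafilter ℕ} (hu : IsFreeUF u) :
    (Filter.comap facMap u ⊓ coSummableFilter).NeBot := by
  refine Filter.inf_neBot_iff.2 fun {S} hS {B} hB => ?_
  obtain ⟨X, hX, hXS⟩ := hS
  by_contra hne
  rw [Set.not_nonempty_iff_eq_empty, ← Set.disjoint_iff_inter_eq_empty] at hne
  exact not_summable_harmonicOn_preimage_facMap (hu X hX)
    (summable_harmonicOn_mono (mem_coSummableFilter.1 hB)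
      (hXS.trans hne.subset_compl_right))

theorem facMap_maps_FSigma_onto_Nstar (u : Ultrafilter ℕ) (hu : IsFreeUF u) :
    ∃ v : Ultrafilter ℕ, IsFreeUF v ∧ Ultrafilter.map facMap v = u ∧
      ∀ A ∈ v, ¬ Summable (Set.indicator A (fun n : ℕ => (1 : ℝ) / n)) := by
  have := comap_facMap_inf_coSummableFilter_neBot hu
  let v := Ultrafilter.of (Filter.comap facMap u ⊓ coSummableFilter)
  have hv : (v : Filter ℕ) ≤ Filter.comap facMap u ⊓ coSummableFilter := Ultrafilter.of_le _
  have hdiv : ∀ A ∈ v, ¬ Summable (harmonicOn A) := fun A hA hs =>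
    Ultrafilter.compl_notMem_iff.2 hA
      (hv.trans inf_le_right (mem_coSummableFilter.2 (by rwa [compl_compl])))
  exact ⟨v, fun A hA hfin => hdiv A hA hfin.summable_harmonicOn,
    Ultrafilter.coe_le_coe.1 (Filter.map_le_iff_le_comap.2 (hv.trans inf_le_left)), hdiv⟩
end
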